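/- arXiv:2404.17162 — 13 statements merged into one kernel-verified Lean document; each statement's English description precedes it below -/
import Mathlib

section
/- Let G be a connected simple finite graph that is Z-vertex magic (i.e., admits a Z-vertex magic labeling). Then there exists k ∈ ℕ such that G is Z_m-vertex magic for every integer m ≥ k. -/
open scoped Classical

/-- A graph `G` on a finite vertex type is `A`-vertex magic if there is a labeling of the
vertices by nonzero elements of `A` such that the sum of the labels over each open
neighborhood is a constant `μ`. -/
def vertexMagic {V : Type*} [Fintype V] (G : SimpleGraph V) (A : Type*) [AddCommGroup A] :
    Prop :=
  ∃ (l : V → A) (μ : A), (∀ v, l v ≠ 0) ∧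
    ∀ v : V, (∑ u : V, if G.Adj v u then l u else 0) = μ

theorem stmt_0 {V : Type*} [Fintype V] (G : SimpleGraph V) (hG : G.Connected)
    (h : vertexMagic G ℤ) :
    ∃ k : ℕ, ∀ m : ℕ, k ≤ m → vertexMagic G (ZMod m) := by
  obtain ⟨l, μ, hl, hμ⟩ := h
  refine ⟨1 + ∑ v, (l v).natAbs, fun m hm => ⟨fun v => (l v : ZMod m), (μ : ZMod m), ?_, ?_⟩⟩
  · intro v hv
    have h1 : (m : ℤ) ∣ l v := (ZMod.intCast_zmod_eq_zero_iff_dvd _ _).1 hv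
    have h2 : m ∣ (l v).natAbs := Int.natCast_dvd.1 h1
    have h3 : m ≤ (l v).natAbs := Nat.le_of_dvd (Int.natAbs_pos.2 (hl v)) h2
    have h4 : (l v).natAbs ≤ ∑ v, (l v).natAbs :=
      Finset.single_le_sum (f := fun v => (l v).natAbs) (fun _ _ => Nat.zero_le _)
        (Finset.mem_univ v)
    omega
  · intro v
    rw [← hμ v]
    push_cast
    rfl
end

section
/- Let G be a connected simple finite graph, m ∈ ℕ, and suppose there is a single labeling l of V(G) by integers that, when interpreted modulo p, is a Z_p-vertex magic labeling of G for every prime p ≥ m. Then G is Z-vertex magic. -/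
open scoped Classical

theorem stmt_1 {V : Type*} [Fintype V] (G : SimpleGraph V) (hG : G.Connected)
    (m : ℕ) (l : V → ℤ)
    (h : ∀ p : ℕ, p.Prime → m ≤ p →
      (∀ v : V, ((l v : ZMod p)) ≠ 0) ∧
      ∃ μ : ZMod p, ∀ v : V, (∑ u : V, if G.Adj v u then ((l u : ZMod p)) else 0) = μ) :
    vertexMagic G ℤ := by
  obtain ⟨v0⟩ := hG.nonempty
  refine ⟨l, ∑ u : V, if G.Adj v0 u then l u else 0, ?_, ?_⟩
  · intro v hv
    obtain ⟨p, hmp, hp⟩ := Nat.exists_infinite_primes m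
    apply (h p hp hmp).1 v
    rw [hv, Int.cast_zero]
  · intro v
    set a : ℤ := ∑ u : V, if G.Adj v u then l u else 0 with ha
    set b : ℤ := ∑ u : V, if G.Adj v0 u then l u else 0 with hb
    obtain ⟨p, hmp, hp⟩ := Nat.exists_infinite_primes (m + (a - b).natAbs + 1)
    obtain ⟨-, μ, hμ⟩ := h p hp (by omega)
    have key : ((a - b : ℤ) : ZMod p) = 0 := by
      rw [Int.cast_sub, sub_eq_zero, ha, hb]
      push_cast
      rw [hμ v, hμ v0]
    rw [CharP.intCast_eq_zero_iff (ZMod p) p] at key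
    have h0 := Int.eq_zero_of_dvd_of_natAbs_lt_natAbs key (by simp only [Int.natAbs_natCast]; omega)
    omega
end

section
/- Let A be an Abelian group with |A| > 2 and let G be a finite simple graph. If the reduced graph H of G is A-vertex magic, then G is A-vertex magic. -/
open scoped Classical

/-- The equivalence relation `u ∼_G v ↔ N_G(u) = N_G(v)`. -/
def nbhdSetoid {V : Type*} (G : SimpleGraph V) : Setoid V :=
  ⟨fun u v => G.neighborSet u = G.neighborSet v,
    ⟨fun _ => rfl, Eq.symm, Eq.trans⟩⟩

/-- The reduced graph of `G`: vertices are the equivalence classes of `∼_G`, with `[u]`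
adjacent to `[v]` iff `u` is adjacent to `v` in `G`. -/
def reducedGraph {V : Type*} (G : SimpleGraph V) :
    SimpleGraph (Quotient (nbhdSetoid G)) where
  Adj x y := ∃ u v : V, Quotient.mk (nbhdSetoid G) u = x ∧
    Quotient.mk (nbhdSetoid G) v = y ∧ G.Adj u v
  symm := by
    refine ⟨?_⟩
    rintro x y ⟨u, v, hu, hv, h⟩
    exact ⟨v, u, hv, hu, h.symm⟩
  loopless := by
    refine ⟨?_⟩
    rintro x ⟨u, v, hu, hv, h⟩
    rw [← hv] at hu
    have hN : G.neighborSet u = G.neighborSet v := Quotient.exact hu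
    have hm : u ∈ G.neighborSet v := h.symm
    rw [← hN] at hm
    exact G.loopless.irrefl u hm

theorem exists_nonzero_sum {V : Type*} {A : Type*} [AddCommGroup A]
    (hA : ∀ x y : A, ∃ z : A, z ≠ x ∧ z ≠ y) (s : Finset V) (hs : s.Nonempty) :
    ∀ a : A, a ≠ 0 → ∃ f : V → A, (∀ v, f v ≠ 0) ∧ ∑ v ∈ s, f v = a := by
  induction hs using Finset.Nonempty.cons_induction with
  | singleton x => exact fun a ha => ⟨fun _ => a, fun _ => ha, by simp⟩
  | cons x s hx hs ih =>
    intro a ha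
    obtain ⟨b, hb0, hba⟩ := hA 0 a
    obtain ⟨f, hf, hsum⟩ := ih (a - b) (sub_ne_zero.2 hba.symm)
    refine ⟨Function.update f x b, fun v => ?_, ?_⟩
    · by_cases hv : v = x
      · subst hv; simpa using hb0
      · simpa [hv] using hf v
    · rw [Finset.sum_cons, Function.update_self, Finset.sum_update_of_notMem hx, hsum]
      abel

theorem reduced_adj {V : Type*} (G : SimpleGraph V) (u v : V) :
    (reducedGraph G).Adj (Quotient.mk (nbhdSetoid G) u) (Quotient.mk (nbhdSetoid G) v) ↔
      G.Adj u v := by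
  constructor
  · rintro ⟨u', v', hu, hv, h⟩
    have hu : G.neighborSet u' = G.neighborSet u := Quotient.exact hu
    have hv : G.neighborSet v' = G.neighborSet v := Quotient.exact hv
    have h1 : v' ∈ G.neighborSet u := hu ▸ h
    have h2 : u ∈ G.neighborSet v := hv ▸ (G.adj_symm h1 : G.Adj v' u)
    exact G.adj_symm h2
  · exact fun h => ⟨u, v, rfl, rfl, h⟩

theorem stmt_2 {V : Type*} [Fintype V] (G : SimpleGraph V)
    (A : Type*) [AddCommGroup A] (hA : 2 < Cardinal.mk A)
    (h : vertexMagic (reducedGraph G) A) :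
    vertexMagic G A := by
  have hA' : ∀ x y : A, ∃ z : A, z ≠ x ∧ z ≠ y := by
    refine Cardinal.exists_ne_ne_of_three_le ?_
    have h2 : ((2 : ℕ) : Cardinal) < Cardinal.mk A := by simpa using hA
    have h3 := Cardinal.natCast_add_one_le_iff.2 h2
    rw [← Nat.cast_add_one] at h3
    simpa using h3
  obtain ⟨l, μ, hl, hμ⟩ := h
  have key := fun q : Quotient (nbhdSetoid G) =>
    exists_nonzero_sum hA' (Finset.univ.filter fun v => Quotient.mk (nbhdSetoid G) v = q)
      (by obtain ⟨v, hv⟩ := Quotient.exists_rep q; exact ⟨v, by simpa using hv⟩) (l q) (hl q)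
  choose F hF hs using key
  refine ⟨fun v => F (Quotient.mk _ v) v, μ, fun v => hF _ _, fun v => ?_⟩
  rw [← hμ (Quotient.mk _ v), ← Finset.sum_fiberwise Finset.univ (Quotient.mk (nbhdSetoid G))]
  refine Finset.sum_congr rfl fun q _ => ?_
  rw [← hs q]
  split_ifs with hq
  · refine Finset.sum_congr rfl fun u hu => ?_
    have hu : Quotient.mk (nbhdSetoid G) u = q := by simpa using hu
    subst hu
    rw [if_pos ((reduced_adj G v u).1 hq)]
  · refine Finset.sum_eq_zero fun u hu => ?_
    have hu : Quotient.mk (nbhdSetoid G) u = q := by simpa using hu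
    subst hu
    rw [if_neg fun h => hq ((reduced_adj G v u).2 h)]
end

section
/- Let A be an Abelian group with |A| > 2. Every complete m-partite graph K_{n_1,n_2,...,n_m} is A-vertex magic. -/
open scoped Classical

theorem exists_sum_aux {A : Type*} [AddCommGroup A]
    (h : ∀ g : A, ∃ a : A, a ≠ 0 ∧ a ≠ g) (k : ℕ) :
    ∀ g : A, g ≠ 0 → ∃ f : Fin (k + 1) → A, (∀ i, f i ≠ 0) ∧ ∑ i, f i = g := by
  induction k with
  | zero => exact fun g hg => ⟨fun _ => g, fun _ => hg, by simp⟩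
  | succ k ih =>
    intro g hg
    obtain ⟨a, ha, hag⟩ := h g
    obtain ⟨f, hf, hs⟩ := ih (g - a) (sub_ne_zero.2 hag.symm)
    refine ⟨Fin.cons a f, ?_, ?_⟩
    · intro i
      refine Fin.cases ?_ ?_ i
      · simpa using ha
      · intro j
        simpa using hf j
    · rw [Fin.sum_univ_succ]
      simp [hs]

theorem stmt_3 {m : ℕ} (n : Fin m → ℕ) (hn : ∀ i, 0 < n i)
    (A : Type*) [AddCommGroup A] (hA : 2 < Cardinal.mk A) :
    vertexMagic (SimpleGraph.completeMultipartiteGraph (fun i : Fin m => Fin (n i))) A := by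
  have h : ∀ g : A, ∃ a : A, a ≠ 0 ∧ a ≠ g := by
    intro g
    by_contra hc
    push Not at hc
    have hu : (Set.univ : Set A) ⊆ {0, g} := by
      intro a _
      by_cases h0 : a = 0
      · simp [h0]
      · simp [hc a h0]
    have h1 := Cardinal.mk_le_mk_of_subset hu
    rw [Cardinal.mk_univ] at h1
    have h2 : Cardinal.mk ({0, g} : Set A) ≤ 2 := by
      refine (Cardinal.mk_insert_le).trans ?_
      rw [Cardinal.mk_singleton, one_add_one_eq_two]
    exact absurd (h1.trans h2) (not_le.2 hA)
  obtain ⟨g, hg, -⟩ := h 0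
  have key : ∀ i, ∃ f : Fin (n i) → A, (∀ j, f j ≠ 0) ∧ ∑ j, f j = g := by
    intro i
    obtain ⟨k, hk⟩ := Nat.exists_eq_succ_of_ne_zero (hn i).ne'
    rw [hk]
    exact exists_sum_aux h k g hg
  choose f hf hs using key
  refine ⟨fun v => f v.1 v.2, m • g - g, fun v => hf _ _, ?_⟩
  intro v
  rw [Fintype.sum_sigma]
  have e : ∀ i : Fin m, (∑ j : Fin (n i), if (SimpleGraph.completeMultipartiteGraph
      (fun i : Fin m => Fin (n i))).Adj v ⟨i, j⟩ then f i j else 0)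
      = g - if v.1 = i then g else 0 := by
    intro i
    by_cases hi : v.1 = i
    · simp [SimpleGraph.completeMultipartiteGraph, hi]
    · simp [SimpleGraph.completeMultipartiteGraph, hi, hs]
  refine (Finset.sum_congr rfl fun i _ => (?_ : _ = g - if v.1 = i then g else 0)).trans ?_
  · convert e i
  rw [Finset.sum_sub_distrib]
  simp
end

section
/- Let A be an Abelian group with |A| > 2. For any complete m-partite graph G = K_{n_1,n_2,...,n_m} and any n ∈ ℕ, the join G + K_n (obtained by adding all edges between V(G) and the vertices of a complete graph K_n) is A-vertex magic. -/
open scoped Classical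

/-- The join `G + H` of two graphs: the disjoint union of `G` and `H` together with all
edges between the vertices of `G` and the vertices of `H`. -/
def graphJoin {α β : Type*} (G : SimpleGraph α) (H : SimpleGraph β) :
    SimpleGraph (α ⊕ β) where
  Adj x y :=
    match x, y with
    | Sum.inl a, Sum.inl b => G.Adj a b
    | Sum.inr a, Sum.inr b => H.Adj a b
    | Sum.inl _, Sum.inr _ => True
    | Sum.inr _, Sum.inl _ => True
  symm := by
    constructor
    rintro (a | a) (b | b) h <;> simp_all
    · exact h.symm
    · exact h.symm
  loopless := by
    constructor
    rintro (a | a) h <;> simp_all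

theorem exists_label {A : Type*} [AddCommGroup A] (hA : 2 < Cardinal.mk A) (k : ℕ) :
    ∀ a : A, a ≠ 0 → ∃ f : Fin (k + 1) → A, (∀ x, f x ≠ 0) ∧ ∑ x, f x = a := by
  induction k with
  | zero => exact fun a ha => ⟨fun _ => a, fun _ => ha, by simp⟩
  | succ k ih =>
    intro a ha
    obtain ⟨b, hb⟩ : ∃ b : A, b ∉ ({0, a} : Finset A) := by
      by_contra! hc
      have h1 : Cardinal.mk A ≤ 2 := by
        have : (Set.univ : Set A) = (({0, a} : Finset A) : Set A) := by
          ext x; simpa using hc x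
        rw [← Cardinal.mk_univ, this]
        have h2 : Cardinal.mk ({0, a} : Finset A) ≤ 2 := by
          rw [Cardinal.mk_coe_finset]
          exact_mod_cast Finset.card_le_two
        exact h2
      exact absurd hA (not_lt.mpr h1)
    simp only [Finset.mem_insert, Finset.mem_singleton, not_or] at hb
    obtain ⟨f, hf, hs⟩ := ih (a - b) (sub_ne_zero.mpr (Ne.symm hb.2))
    refine ⟨Fin.cons b f, ?_, ?_⟩
    · intro x
      refine Fin.cases ?_ ?_ x
      · simpa using hb.1
      · intro y; simpa using hf y
    · rw [Fin.sum_univ_succ]; simp [hs]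

theorem sum_ne_aux {A : Type*} [AddCommGroup A] (n : ℕ) (i : Fin n) (a : A) :
    (∑ j : Fin n, if i ≠ j then a else 0) = n • a - a := by
  have h : ∀ j : Fin n, (if i ≠ j then a else 0) = a - (if i = j then a else 0) := by
    intro j; by_cases h : i = j <;> simp [h]
  simp only [h, Finset.sum_sub_distrib]
  simp

theorem stmt_5 {m : ℕ} (nn : Fin m → ℕ) (hn : ∀ i, 0 < nn i) (n : ℕ)
    (A : Type*) [AddCommGroup A] (hA : 2 < Cardinal.mk A) :
    vertexMagic
      (graphJoin (SimpleGraph.completeMultipartiteGraph (fun i : Fin m => Fin (nn i)))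
        (⊤ : SimpleGraph (Fin n))) A := by
  obtain ⟨a, ha⟩ : ∃ a : A, a ≠ 0 := by
    by_contra! hc
    have : Subsingleton A := ⟨fun x y => by rw [hc x, hc y]⟩
    have h1 : Cardinal.mk A ≤ 1 := Cardinal.le_one_iff_subsingleton.mpr this
    exact absurd (hA.trans_le h1) (by norm_num)
  have key : ∀ i, ∃ f : Fin (nn i) → A, (∀ x, f x ≠ 0) ∧ ∑ x, f x = a := by
    intro i
    obtain ⟨k, hk⟩ := Nat.exists_eq_succ_of_ne_zero (hn i).ne'
    rw [hk]
    exact exists_label hA k a ha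
  choose f hf hs using key
  refine ⟨Sum.elim (fun p => f p.1 p.2) (fun _ => a), m • a + n • a - a, ?_, ?_⟩
  · rintro (v | v)
    · exact hf _ _
    · exact ha
  · rintro (⟨i, x⟩ | v)
    · rw [Fintype.sum_sum_type, Fintype.sum_sigma]
      have h : ∀ j, (∑ y : Fin (nn j), if i ≠ j then f j y else 0) = if i ≠ j then a else 0 := by
        intro j; by_cases h : i = j
        · simp [h]
        · simp [h, hs]
      have h2 := sum_ne_aux m i a
      simp only [← h] at h2
      simp only [graphJoin, SimpleGraph.comap_adj, SimpleGraph.completeMultipartiteGraph,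
        SimpleGraph.top_adj, Sum.elim_inl, Sum.elim_inr, if_true]
      have h3 : (∑ _y : Fin n, a) = n • a := by simp
      rw [h3]
      convert congrArg (· + n • a) h2 using 1
      abel
    · rw [Fintype.sum_sum_type, Fintype.sum_sigma]
      have h2 := sum_ne_aux n v a
      simp only [graphJoin, SimpleGraph.top_adj, Sum.elim_inl, Sum.elim_inr, if_true, hs]
      have h3 : (∑ _y : Fin m, a) = m • a := by simp
      rw [h3]
      convert congrArg (m • a + ·) h2 using 1
      abel
end

section
/- Let A be an Abelian group with |A| > 2, let H be a simple graph on k vertices, and for each j = 1,...,k let G_j = K_{n_j}^c be the edgeless graph on n_j vertices with n_j > 1. Then the H-join G = H[G_1, G_2, ..., G_k] is A-vertex magic. -/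
open scoped Classical

/-- The `H`-join `H[G_1, …, G_k]` of a family of graphs `Gs i` along a graph `H`:
each vertex `i` of `H` is replaced by the graph `Gs i`, and every vertex of `Gs i` is
joined to every vertex of `Gs j` whenever `i` and `j` are adjacent in `H`. -/
def hJoin {ι : Type*} (H : SimpleGraph ι) {V : ι → Type*}
    (Gs : ∀ i, SimpleGraph (V i)) : SimpleGraph (Σ i, V i) where
  Adj x y := H.Adj x.1 y.1 ∨ ∃ h : x.1 = y.1, (Gs y.1).Adj (h ▸ x.2) y.2
  symm := by
    constructor
    rintro ⟨i, a⟩ ⟨j, b⟩ (h | ⟨h, hadj⟩)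
    · exact Or.inl h.symm
    · dsimp only at h
      subst h
      exact Or.inr ⟨rfl, hadj.symm⟩
  loopless := by
    constructor
    rintro ⟨i, a⟩ (h | ⟨h, hadj⟩)
    · exact H.loopless.irrefl i h
    · exact (Gs i).loopless.irrefl a hadj

theorem exists_avoid {A : Type*} [AddCommGroup A] (hA : 2 < Cardinal.mk A) (c : A) :
    ∃ a : A, a ≠ 0 ∧ a ≠ c := by
  by_contra! h
  have h1 : (Set.univ : Set A) ⊆ {0, c} := by
    intro a _
    by_cases h0 : a = 0
    · simp [h0]
    · simp [h a h0]
  have h2 := Cardinal.mk_le_mk_of_subset h1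
  rw [Cardinal.mk_univ] at h2
  have h3 : Cardinal.mk ({0, c} : Set A) ≤ 2 := by
    refine Cardinal.mk_insert_le.trans ?_
    rw [Cardinal.mk_singleton, one_add_one_eq_two]
  exact absurd hA (not_lt.mpr (h2.trans h3))

theorem exists_sum {A : Type*} [AddCommGroup A] (hA : 2 < Cardinal.mk A) (m : ℕ) :
    ∀ c : A, ∃ f : Fin (m + 2) → A, (∀ i, f i ≠ 0) ∧ ∑ i, f i = c := by
  induction m with
  | zero =>
    intro c
    obtain ⟨a, h0, hc⟩ := exists_avoid hA c
    refine ⟨![a, c - a], ?_, by simp [Fin.sum_univ_two]⟩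
    intro i
    fin_cases i
    · simpa using h0
    · simpa [sub_eq_zero] using hc.symm
  | succ m ih =>
    intro c
    obtain ⟨a, h0, -⟩ := exists_avoid hA c
    obtain ⟨f, hf, hs⟩ := ih (c - a)
    refine ⟨Fin.cons a f, ?_, by simp [Fin.sum_univ_succ (n := m + 2), hs]⟩
    intro i
    refine Fin.cases ?_ (fun j => ?_) i
    · simpa using h0
    · simpa using hf j

theorem stmt_6 {k : ℕ} (H : SimpleGraph (Fin k)) (n : Fin k → ℕ) (hn : ∀ j, 1 < n j)
    (A : Type*) [AddCommGroup A] (hA : 2 < Cardinal.mk A) :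
    vertexMagic (hJoin H (fun j : Fin k => (⊥ : SimpleGraph (Fin (n j))))) A := by
  have key : ∀ j, ∃ f : Fin (n j) → A, (∀ i, f i ≠ 0) ∧ ∑ i, f i = 0 := by
    intro j
    obtain ⟨m, hm⟩ := Nat.exists_eq_add_of_le' (hn j)
    have hm' : n j = m + 2 := hm
    rw [hm']
    exact exists_sum hA m 0
  choose f hf hs using key
  refine ⟨fun x => f x.1 x.2, 0, fun x => hf x.1 x.2, ?_⟩
  rintro ⟨i, a⟩
  rw [Fintype.sum_sigma]
  refine Finset.sum_eq_zero fun j _ => ?_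
  by_cases h : H.Adj i j
  · simp [hJoin, h, hs]
  · simp [hJoin, h]
end

section
/- Let A be an Abelian group with |A| > 2, let k ≥ 2, and let q_1,...,q_k be prime powers with each q_i ≥ 3. If R ≅ F_{q_1} × F_{q_2} × ... × F_{q_k} is the product of the corresponding finite fields, then the zero-divisor graph Γ(R) is A-vertex magic. -/
open scoped Classical

/-- The zero-divisor graph `Γ(R)` of a commutative ring `R`: vertices are the
zero-divisors of `R` (nonzero elements annihilated by some nonzero element), with two
distinct vertices `u` and `v` adjacent iff `u * v = 0`. -/
def zeroDivisorGraph (R : Type*) [CommRing R] :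
    SimpleGraph {x : R // x ≠ 0 ∧ ∃ y : R, y ≠ 0 ∧ x * y = 0} where
  Adj u v := u ≠ v ∧ (u : R) * v = 0
  symm := by
    refine ⟨?_⟩
    rintro u v ⟨h1, h2⟩
    exact ⟨h1.symm, by rwa [mul_comm]⟩
  loopless := by
    refine ⟨?_⟩
    rintro u ⟨h1, -⟩
    exact h1 rfl

theorem aux_target {A : Type*} [AddCommGroup A] (hA : ∀ c : A, ∃ a : A, a ≠ 0 ∧ a ≠ c)
    {V : Type*} (s : Finset V) (hs : s.Nonempty) :
    ∀ c : A, c ≠ 0 → ∃ l : V → A, (∀ v, l v ≠ 0) ∧ ∑ v ∈ s, l v = c := by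
  induction hs using Finset.Nonempty.cons_induction with
  | singleton a => exact fun c hc => ⟨fun _ => c, fun _ => hc, by simp⟩
  | cons a s h hs ih =>
    intro c hc
    obtain ⟨x, hx0, hxc⟩ := hA c
    obtain ⟨l, hl, hsum⟩ := ih (c - x) (sub_ne_zero.2 (Ne.symm hxc))
    refine ⟨Function.update l a x, fun v => ?_, ?_⟩
    · by_cases hv : v = a
      · subst hv; simpa using hx0
      · simpa [Function.update_of_ne hv] using hl v
    · rw [Finset.sum_cons, Function.update_self,
        Finset.sum_congr rfl (g := l) (fun v hv => Function.update_of_ne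
          (ne_of_mem_of_not_mem hv h) _ _), hsum]
      abel

theorem aux_zero {A : Type*} [AddCommGroup A] (hA : ∀ c : A, ∃ a : A, a ≠ 0 ∧ a ≠ c)
    {V : Type*} (s : Finset V) (hs : ∀ v ∈ s, ∃ u ∈ s, u ≠ v) :
    ∃ l : V → A, (∀ v, l v ≠ 0) ∧ ∑ v ∈ s, l v = 0 := by
  obtain ⟨x, hx0, -⟩ := hA 0
  rcases s.eq_empty_or_nonempty with rfl | ⟨a, ha⟩
  · exact ⟨fun _ => x, fun _ => hx0, by simp⟩
  · obtain ⟨u, hu, hua⟩ := hs a ha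
    obtain ⟨l, hl, hsum⟩ := aux_target hA (s.erase a) ⟨u, by simp [hu, hua]⟩ (-x) (by simpa)
    refine ⟨Function.update l a x, fun v => ?_, ?_⟩
    · by_cases hv : v = a
      · subst hv; simpa using hx0
      · simpa [Function.update_of_ne hv] using hl v
    · rw [← Finset.add_sum_erase s _ ha, Function.update_self,
        Finset.sum_congr rfl (g := l) (fun v hv => Function.update_of_ne
          (Finset.ne_of_mem_erase hv) _ _), hsum]
      abel

theorem stmt_8 (A : Type*) [AddCommGroup A] (hA : 2 < Cardinal.mk A)
    (k : ℕ) (hk : 2 ≤ k) (q : Fin k → ℕ) (hq : ∀ i, IsPrimePow (q i))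
    (hq3 : ∀ i, 3 ≤ q i)
    (K : Fin k → Type*) [∀ i, Field (K i)] [∀ i, Fintype (K i)]
    (hcard : ∀ i, Fintype.card (K i) = q i)
    (R : Type*) [CommRing R] [Fintype R] (e : R ≃+* ∀ i, K i) :
    vertexMagic (zeroDivisorGraph R) A := by
  have hA' : ∀ c : A, ∃ a : A, a ≠ 0 ∧ a ≠ c := by
    intro c
    by_contra! h
    have h1 : (Set.univ : Set A) ⊆ {0, c} := by
      intro a _
      by_cases ha : a = 0
      · simp [ha]
      · simp [h a ha]
    have h2 := Cardinal.mk_le_mk_of_subset h1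
    rw [Cardinal.mk_univ] at h2
    have h3 : Cardinal.mk ({0, c} : Set A) ≤ 2 := by
      refine Cardinal.mk_insert_le.trans ?_
      rw [Cardinal.mk_singleton, one_add_one_eq_two]
    exact absurd (h2.trans h3) (not_le.2 hA)
  have hx : ∀ i, ∃ x : K i, x ≠ 0 ∧ x ≠ 1 := by
    intro i
    by_contra! h
    have h1 : (Finset.univ : Finset (K i)) ⊆ {0, 1} := by
      intro a _
      by_cases ha : a = 0
      · simp [ha]
      · simp [h a ha]
    have h2 := Finset.card_le_card h1
    have h3 := hq3 i
    rw [Finset.card_univ, hcard i] at h2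
    have h4 : ({0, 1} : Finset (K i)).card ≤ 2 := Finset.card_le_two
    omega
  choose x hx0 hx1 using hx
  let f : {x : R // x ≠ 0 ∧ ∃ y : R, y ≠ 0 ∧ x * y = 0} → Finset (Fin k) :=
    fun v => Finset.univ.filter (fun i => e v.1 i ≠ 0)
  have hfib : ∀ U : Finset (Fin k), ∀ v ∈ Finset.univ.filter (fun v => f v = U),
      ∃ u ∈ Finset.univ.filter (fun v => f v = U), u ≠ v := by
    intro U v hv
    obtain ⟨v, hv0, y, hy0, hvy⟩ := v
    have hne : e v ≠ 0 := by simpa using hv0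
    obtain ⟨i, hi⟩ := Function.ne_iff.1 hne
    have hee : ∀ j, e (v * e.symm x) j = e v j * x j := by intro j; simp
    have hne' : v * e.symm x ≠ 0 := by
      intro h
      have := hee i
      rw [h] at this
      simp at this
      rcases this with h | h
      · exact hi h
      · exact hx0 i h
    refine ⟨⟨v * e.symm x, hne', y, hy0, ?_⟩, ?_, ?_⟩
    · rw [mul_right_comm, hvy, zero_mul]
    · simp only [Finset.mem_filter, Finset.mem_univ, true_and] at hv ⊢
      rw [← hv]
      ext j
      simp [f, hx0]
    · intro h
      have h' : v * e.symm x = v := congrArg Subtype.val h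
      have := hee i
      rw [h'] at this
      exact hx1 i (mul_left_cancel₀ hi (by rw [← this, mul_one]))
  choose g hg0 hgs using fun U : Finset (Fin k) => aux_zero hA' _ (hfib U)
  refine ⟨fun v => g (f v) v, 0, fun v => hg0 _ _, fun v => ?_⟩
  have hadj : ∀ u, (zeroDivisorGraph R).Adj v u ↔ Disjoint (f v) (f u) := by
    intro u
    have hmul : (v : R) * u = 0 ↔ Disjoint (f v) (f u) := by
      rw [← e.map_eq_zero_iff, funext_iff, Finset.disjoint_left]
      refine forall_congr' fun i => ?_
      simp [f, or_iff_not_imp_left]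
    rw [← hmul]
    refine ⟨fun h => h.2, fun h => ⟨?_, h⟩⟩
    rintro rfl
    have h1 : e (v : R) * e v = 0 := by rw [← map_mul, h, map_zero]
    apply v.2.1
    rw [← e.map_eq_zero_iff]
    funext i
    have := congrFun h1 i
    simpa using this
  rw [← Finset.sum_fiberwise Finset.univ f]
  refine Finset.sum_eq_zero fun U _ => ?_
  by_cases hU : Disjoint (f v) U
  · rw [← hgs U]
    refine Finset.sum_congr rfl fun u hu => ?_
    have hu' : f u = U := by simpa using hu
    rw [if_pos ((hadj u).2 (hu' ▸ hU)), ← hu']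
  · refine Finset.sum_eq_zero fun u hu => ?_
    have hu' : f u = U := by simpa using hu
    rw [if_neg]
    rw [hadj, hu']
    exact hU
end

section
/- Let A be an Abelian group with |A| > 2 and let G be a finite simple graph with reduced graph H. Then G is A-vertex magic if and only if H is A'-magic. -/
open scoped Classical

/-- The reduced graph of `G` is `A'`-magic if there is a labeling of its vertices
(the equivalence classes of `∼_G`) by elements of `A`, where the label `0` is permitted
on a class only when the class has at least two elements, such that the sum of the labels
over each open neighborhood in the reduced graph is a constant `μ`. -/
def reducedGraphAPrimeMagic {V : Type*} [Fintype V] (G : SimpleGraph V)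
    (A : Type*) [AddCommGroup A] : Prop :=
  ∃ (l : Quotient (nbhdSetoid G) → A) (μ : A),
    (∀ x : Quotient (nbhdSetoid G), l x = 0 →
      2 ≤ Nat.card {u : V // Quotient.mk (nbhdSetoid G) u = x}) ∧
    ∀ x : Quotient (nbhdSetoid G),
      (∑ y : Quotient (nbhdSetoid G), if (reducedGraph G).Adj x y then l y else 0) = μ

theorem exists_third {A : Type*} [AddCommGroup A] (hA : 2 < Cardinal.mk A) (a : A) :
    ∃ x : A, x ≠ 0 ∧ x ≠ a := by
  by_contra! h
  have h1 : (Set.univ : Set A) ⊆ {0, a} := by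
    intro x _
    by_cases hx : x = 0
    · simp [hx]
    · simp [h x hx]
  have h2 := Cardinal.mk_le_mk_of_subset h1
  rw [Cardinal.mk_univ] at h2
  have h3 : Cardinal.mk ({0, a} : Set A) ≤ 2 := by
    refine (Cardinal.mk_insert_le).trans ?_
    rw [Cardinal.mk_singleton]
    exact le_of_eq one_add_one_eq_two
  exact absurd (h2.trans h3) (not_le.mpr hA)

theorem exists_split {V A : Type*} [AddCommGroup A] (hA : 2 < Cardinal.mk A)
    (s : Finset V) : ∀ a : A, s.Nonempty → (a = 0 → 2 ≤ s.card) →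
    ∃ f : V → A, (∀ v, f v ≠ 0) ∧ ∑ v ∈ s, f v = a := by
  induction s using Finset.induction_on with
  | empty => intro a h; simp at h
  | insert v t hv ih =>
    intro a _ h
    rcases t.eq_empty_or_nonempty with rfl | ht
    · have ha : a ≠ 0 := by
        intro h0
        have := h h0
        simp at this
      exact ⟨fun _ => a, fun _ => ha, by simp⟩
    · obtain ⟨x, hx0, hxa⟩ := exists_third hA a
      obtain ⟨f, hf, hs⟩ := ih (a - x) ht
        (fun h0 => absurd (sub_eq_zero.mp h0).symm hxa)
      refine ⟨fun u => if u = v then x else f u, ?_, ?_⟩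
      · intro u
        dsimp only
        split_ifs
        · exact hx0
        · exact hf u
      · rw [Finset.sum_insert hv]
        have : ∑ u ∈ t, (if u = v then x else f u) = ∑ u ∈ t, f u := by
          refine Finset.sum_congr rfl fun u hu => ?_
          rw [if_neg]
          rintro rfl
          exact hv hu
        rw [this, hs]
        simp

theorem reduced_sum {V A : Type*} [Fintype V] [AddCommGroup A] (G : SimpleGraph V)
    (l : V → A) (m : Quotient (nbhdSetoid G) → A)
    (h : ∀ x, ∑ u with Quotient.mk (nbhdSetoid G) u = x, l u = m x) (v : V) :
    (∑ u : V, if G.Adj v u then l u else 0) =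
    ∑ y : Quotient (nbhdSetoid G),
      if (reducedGraph G).Adj (Quotient.mk (nbhdSetoid G) v) y then m y else 0 := by
  rw [← Finset.sum_fiberwise Finset.univ (Quotient.mk (nbhdSetoid G))]
  refine Finset.sum_congr rfl fun y _ => ?_
  rw [← h y]
  split_ifs with hy
  · refine Finset.sum_congr rfl fun u hu => ?_
    obtain rfl := (Finset.mem_filter.mp hu).2
    rw [if_pos ((reduced_adj G v u).mp hy)]
  · refine Finset.sum_eq_zero fun u hu => ?_
    obtain rfl := (Finset.mem_filter.mp hu).2
    rw [if_neg (fun h => hy ((reduced_adj G v u).mpr h))]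

theorem class_card {V : Type*} [Fintype V] (G : SimpleGraph V) (x : Quotient (nbhdSetoid G)) :
    Nat.card {u : V // Quotient.mk (nbhdSetoid G) u = x} =
      (Finset.univ.filter fun u => Quotient.mk (nbhdSetoid G) u = x).card := by
  rw [Nat.card_eq_fintype_card, Fintype.card_subtype]

theorem stmt_10 {V : Type*} [Fintype V] (G : SimpleGraph V)
    (A : Type*) [AddCommGroup A] (hA : 2 < Cardinal.mk A) :
    vertexMagic G A ↔ reducedGraphAPrimeMagic G A := by
  constructor
  · rintro ⟨l, μ, hl, hμ⟩
    refine ⟨fun x => ∑ u with Quotient.mk (nbhdSetoid G) u = x, l u, μ, ?_, ?_⟩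
    · intro x hx
      rw [class_card]
      by_contra hc
      have hpos : 0 < (Finset.univ.filter fun u => Quotient.mk (nbhdSetoid G) u = x).card := by
        obtain ⟨u, hu⟩ := Quotient.exists_rep x
        exact Finset.card_pos.mpr ⟨u, Finset.mem_filter.mpr ⟨Finset.mem_univ _, hu⟩⟩
      obtain ⟨w, hw⟩ := Finset.card_eq_one.mp (by omega :
        (Finset.univ.filter fun u => Quotient.mk (nbhdSetoid G) u = x).card = 1)
      dsimp only at hx
      rw [hw, Finset.sum_singleton] at hx
      exact hl w hx
    · intro x
      obtain ⟨v, rfl⟩ := Quotient.exists_rep x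
      rw [← hμ v]
      exact (reduced_sum G l _ (fun _ => rfl) v).symm
  · rintro ⟨m, μ, hm, hμ⟩
    have key : ∀ x : Quotient (nbhdSetoid G), ∃ f : V → A, (∀ v, f v ≠ 0) ∧
        ∑ u with Quotient.mk (nbhdSetoid G) u = x, f u = m x := by
      intro x
      apply exists_split hA
      · obtain ⟨u, hu⟩ := Quotient.exists_rep x
        exact ⟨u, Finset.mem_filter.mpr ⟨Finset.mem_univ _, hu⟩⟩
      · intro h0
        rw [← class_card]
        exact hm x h0
    choose f hf hs using key
    refine ⟨fun v => f (Quotient.mk (nbhdSetoid G) v) v, μ, fun v => hf _ v, fun v => ?_⟩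
    rw [← hμ (Quotient.mk (nbhdSetoid G) v)]
    refine reduced_sum G _ m (fun x => ?_) v
    rw [← hs x]
    refine Finset.sum_congr rfl fun u hu => ?_
    rw [(Finset.mem_filter.mp hu).2]
end

section
/- Let A be an Abelian group with at least three elements. If G is a finite simple graph in which every non-pendant vertex is a strong support vertex, then G is A-vertex magic. -/
open scoped Classical

theorem exists_sum_aux_s11 {V A : Type*} [AddCommGroup A]
    (hA : ∀ x y : A, ∃ z, z ≠ x ∧ z ≠ y) (s : Finset V) (hs : s.Nonempty) :
    ∀ a : A, (s.card = 1 → a ≠ 0) → ∃ f : V → A, (∀ v, f v ≠ 0) ∧ ∑ u ∈ s, f u = a := by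
  induction hs using Finset.Nonempty.cons_induction with
  | singleton x =>
    intro a ha
    exact ⟨fun _ => a, fun _ => ha (by simp), by simp⟩
  | cons x s hx hs ih =>
    intro a _
    obtain ⟨y, hy0, hya⟩ := hA 0 a
    obtain ⟨f, hf, hsum⟩ := ih (a - y) (fun _ => sub_ne_zero.2 hya.symm)
    refine ⟨fun v => if v = x then y else f v, ?_, ?_⟩
    · intro v
      dsimp only
      split_ifs
      · exact hy0
      · exact hf v
    · rw [Finset.sum_cons, if_pos rfl]
      have : ∑ u ∈ s, (if u = x then y else f u) = ∑ u ∈ s, f u := by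
        refine Finset.sum_congr rfl fun u hu => if_neg ?_
        rintro rfl
        exact hx hu
      rw [this, hsum]
      abel

theorem stmt_11 {V : Type*} [Fintype V] (G : SimpleGraph V)
    (A : Type*) [AddCommGroup A] (hA : 3 ≤ Cardinal.mk A)
    (h : ∀ v : V, G.degree v ≠ 1 →
      2 ≤ ((G.neighborFinset v).filter fun u => G.degree u = 1).card) :
    vertexMagic G A := by
  have hA' := Cardinal.exists_ne_ne_of_three_le hA
  obtain ⟨g, hg, -⟩ := hA' 0 0
  have hn : ∀ u : V, ∃ n : V, G.degree u = 1 → ∀ w, G.Adj u w ↔ w = n := by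
    intro u
    by_cases hu : G.degree u = 1
    · rw [← SimpleGraph.card_neighborFinset_eq_degree, Finset.card_eq_one] at hu
      obtain ⟨n, hn⟩ := hu
      refine ⟨n, fun _ w => ?_⟩
      rw [← SimpleGraph.mem_neighborFinset, hn, Finset.mem_singleton]
    · exact ⟨u, fun h' => absurd h' hu⟩
  choose n hn using hn
  have hF : ∀ v : V, ∃ f : V → A, (∀ u, f u ≠ 0) ∧ (G.degree v ≠ 1 →
      ∑ u ∈ (G.neighborFinset v).filter (fun u => G.degree u = 1), f u =
        g - ∑ u ∈ (G.neighborFinset v).filter (fun u => ¬ G.degree u = 1), g) := by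
    intro v
    by_cases hv : G.degree v = 1
    · exact ⟨fun _ => g, fun _ => hg, fun h' => absurd hv h'⟩
    · have h2 := h v hv
      obtain ⟨f, hf, hs⟩ := exists_sum_aux_s11 hA'
        ((G.neighborFinset v).filter (fun u => G.degree u = 1)) (Finset.card_pos.1 (by omega))
        (g - ∑ u ∈ (G.neighborFinset v).filter (fun u => ¬ G.degree u = 1), g)
        (fun h1 => by omega)
      exact ⟨f, hf, fun _ => hs⟩
  choose F hF0 hFs using hF
  refine ⟨fun u => if G.degree u = 1 then (if G.degree (n u) = 1 then g else F (n u) u) else g,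
    g, ?_, ?_⟩
  · intro v
    dsimp only
    split_ifs
    · exact hg
    · exact hF0 _ _
    · exact hg
  · intro v
    by_cases hv : G.degree v = 1
    · simp only [hn v hv, Finset.sum_ite_eq', Finset.mem_univ, if_true]
      by_cases h1 : G.degree (n v) = 1
      · have : v = n (n v) := (hn _ h1 v).1 ((hn v hv _).2 rfl).symm
        rw [if_pos h1, if_pos (this ▸ hv)]
      · rw [if_neg h1]
    · rw [← Finset.sum_filter]
      have e : Finset.univ.filter (fun u => G.Adj v u) = G.neighborFinset v := by
        ext; simp
      rw [e, ← Finset.sum_filter_add_sum_filter_not _ (fun u => G.degree u = 1)]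
      have e1 := hFs v hv
      rw [← eq_sub_iff_add_eq]
      refine Eq.trans ?_ (e1.trans ?_)
      · refine Finset.sum_congr rfl fun u hu => ?_
        rw [Finset.mem_filter, SimpleGraph.mem_neighborFinset] at hu
        have : v = n u := (hn u hu.2 v).1 hu.1.symm
        rw [if_pos hu.2, ← this, if_neg hv]
      · congr 1
        refine Finset.sum_congr rfl fun u hu => ?_
        rw [if_neg (Finset.mem_filter.1 hu).2]
end

section
/- Let A be an Abelian group with |A| > 2. Every finite simple graph H' is an induced subgraph of some A-vertex magic graph G; moreover G can be chosen with |V(G)| ≤ 2|V(H')|. -/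
open scoped Classical

theorem stmt_13 (A : Type*) [AddCommGroup A] (hA : 2 < Cardinal.mk A)
    {W : Type*} [Fintype W] (H' : SimpleGraph W) :
    ∃ (U : Type) (instU : Fintype U) (G : SimpleGraph U) (_ : H' ↪g G),
      @vertexMagic U instU G A _ ∧ @Fintype.card U instU ≤ 2 * Fintype.card W := by
  have hnt : ∃ a : A, a ≠ 0 := by
    by_contra h
    push Not at h
    have : Subsingleton A := ⟨fun x y => by rw [h x, h y]⟩
    have h1 : Cardinal.mk A ≤ 1 := Cardinal.le_one_iff_subsingleton.mpr this
    have h2 : (2 : Cardinal) < 1 := lt_of_lt_of_le hA h1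
    exact absurd h2 (by norm_num)
  obtain ⟨a, ha⟩ := hnt
  let e := Fintype.equivFin W
  let G : SimpleGraph (Fin (Fintype.card W) × Bool) :=
    { Adj := fun x y => H'.Adj (e.symm x.1) (e.symm y.1)
      symm := ⟨fun x y h => H'.symm.symm _ _ h⟩
      loopless := ⟨fun x h => H'.loopless.irrefl _ h⟩ }
  refine ⟨Fin (Fintype.card W) × Bool, inferInstance, G,
    ⟨⟨fun w => (e w, true), fun x y h => e.injective (Prod.ext_iff.mp h).1⟩, ?_⟩, ?_, ?_⟩
  · intro x y
    change H'.Adj (e.symm (e x)) (e.symm (e y)) ↔ H'.Adj x y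
    simp
  · refine ⟨fun x => if x.2 then a else -a, 0, ?_, ?_⟩
    · rintro ⟨x, b⟩
      cases b <;> simp [ha]
    · intro v
      rw [Fintype.sum_prod_type]
      refine Finset.sum_eq_zero fun x _ => ?_
      by_cases h : H'.Adj (e.symm v.1) (e.symm x) <;> simp [G, h]
  · simp [mul_comm]
end

section
/- Let n ≡ 1 or 3 (mod 4) with n ≥ 3, let m ≥ 1, and let A be a non-trivial Abelian group. The generalised friendship graph f_{n,m} is A-vertex magic if and only if A contains an element a whose order does not divide 2m − 1 (equivalently, A is not isomorphic to a product ∏ Z_{m_i} with every m_i dividing 2m − 1). -/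
open scoped Classical

/-- The generalised friendship graph `f_{n,m}`: `m` cycles of length `n` all meeting at a
single common vertex (the vertex `none`) and otherwise pairwise disjoint.  The vertices of
the `i`-th cycle other than the common vertex are `some (i, 0), …, some (i, n - 2)`, laid
out consecutively along the cycle with both ends joined to the common vertex. -/
def genFriendshipGraph (n m : ℕ) : SimpleGraph (Option (Fin m × Fin (n - 1))) where
  Adj x y :=
    match x, y with
    | none, none => False
    | none, some (_, j) => j.val = 0 ∨ j.val = n - 2
    | some (_, j), none => j.val = 0 ∨ j.val = n - 2
    | some (i, j), some (i', j') => i = i' ∧ (j.val + 1 = j'.val ∨ j'.val + 1 = j.val)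
  symm := by
    constructor
    rintro (_ | ⟨i, j⟩) (_ | ⟨i', j'⟩) h <;> simp_all; tauto
  loopless := by
    constructor
    rintro (_ | ⟨i, j⟩) h <;> simp_all

noncomputable def extL {A : Type*} [AddCommGroup A] (n m : ℕ)
    (l : Option (Fin m × Fin (n - 1)) → A) (i : Fin m) (k : ℕ) : A :=
  if h : 1 ≤ k ∧ k - 1 < n - 1 then l (some (i, ⟨k - 1, h.2⟩)) else l none

lemma sum_fin_single {A : Type*} [AddCommGroup A] (k a : ℕ) (g : Fin k → A) :
    (∑ j : Fin k, if j.val = a then g j else 0) = if h : a < k then g ⟨a, h⟩ else 0 := by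
  split_ifs with h
  · rw [Finset.sum_eq_single ⟨a, h⟩]
    · simp
    · intro b _ hb
      rw [if_neg]
      intro h'
      exact hb (Fin.ext h')
    · simp
  · apply Finset.sum_eq_zero
    intro j _
    rw [if_neg]
    have := j.2
    omega

lemma sum_none {A : Type*} [AddCommGroup A] (n m : ℕ) (hn3 : 3 ≤ n)
    (l : Option (Fin m × Fin (n - 1)) → A) :
    (∑ u, if (genFriendshipGraph n m).Adj none u then l u else 0) =
      ∑ i : Fin m, (extL n m l i 1 + extL n m l i (n - 1)) := by
  rw [Fintype.sum_option, Fintype.sum_prod_type]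
  have h0 : (if (genFriendshipGraph n m).Adj none none then l none else 0) = 0 := by
    rw [if_neg]; simp
  rw [h0, zero_add]
  apply Finset.sum_congr rfl
  intro i _
  have : ∀ j : Fin (n-1), (if (genFriendshipGraph n m).Adj none (some (i, j)) then
      l (some (i, j)) else 0) = (if j.val = 0 then l (some (i, j)) else 0) +
      (if j.val = n - 2 then l (some (i, j)) else 0) := by
    intro j
    have hadj : (genFriendshipGraph n m).Adj none (some (i, j)) ↔ (j.val = 0 ∨ j.val = n - 2) :=
      Iff.rfl
    by_cases h1 : j.val = 0
    · have h2 : ¬ (j.val = n - 2) := by omega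
      rw [if_pos (hadj.2 (Or.inl h1)), if_pos h1, if_neg h2, add_zero]
    · by_cases h2 : j.val = n - 2
      · rw [if_pos (hadj.2 (Or.inr h2)), if_neg h1, if_pos h2, zero_add]
      · rw [if_neg (by rw [hadj]; tauto), if_neg h1, if_neg h2, zero_add]
  rw [Finset.sum_congr rfl (fun j _ => this j), Finset.sum_add_distrib, sum_fin_single,
    sum_fin_single, dif_pos (by omega), dif_pos (by omega)]
  unfold extL
  rw [dif_pos (by omega), dif_pos (by omega)]
  rfl

lemma sum_some {A : Type*} [AddCommGroup A] (n m : ℕ) (hn3 : 3 ≤ n)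
    (l : Option (Fin m × Fin (n - 1)) → A) (i : Fin m) (j : Fin (n - 1)) :
    (∑ u, if (genFriendshipGraph n m).Adj (some (i, j)) u then l u else 0) =
      extL n m l i j.val + extL n m l i (j.val + 2) := by
  rw [Fintype.sum_option, Fintype.sum_prod_type, Finset.sum_eq_single i]
  rotate_left
  · intro b _ hb
    apply Finset.sum_eq_zero
    intro j' _
    rw [if_neg]
    intro h
    exact hb h.1.symm
  · simp
  have hj := j.2
  have : ∀ j' : Fin (n-1), (if (genFriendshipGraph n m).Adj (some (i, j)) (some (i, j')) then
      l (some (i, j')) else 0) = (if j'.val = j.val + 1 then l (some (i, j')) else 0) +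
      (if 1 ≤ j.val then (if j'.val = j.val - 1 then l (some (i, j')) else 0) else 0) := by
    intro j'
    have hadj : (genFriendshipGraph n m).Adj (some (i, j)) (some (i, j')) ↔
        (i = i ∧ (j.val + 1 = j'.val ∨ j'.val + 1 = j.val)) := Iff.rfl
    by_cases h1 : j'.val = j.val + 1
    · rw [if_pos (hadj.2 ⟨rfl, by omega⟩), if_pos h1, if_neg (c := j'.val = j.val - 1) (by omega)]
      simp
    · by_cases h2 : j'.val + 1 = j.val
      · rw [if_pos (hadj.2 ⟨rfl, Or.inr h2⟩), if_neg h1, if_pos (by omega), if_pos (by omega),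
          zero_add]
      · rw [if_neg (by rw [hadj]; omega), if_neg h1, zero_add]
        split_ifs <;> first | rfl | omega
  rw [Finset.sum_congr rfl (fun j _ => this j), Finset.sum_add_distrib, sum_fin_single]
  have hadj : (genFriendshipGraph n m).Adj (some (i, j)) none ↔ (j.val = 0 ∨ j.val = n - 2) :=
      Iff.rfl
  by_cases h1 : j.val = 0
  · rw [if_pos (hadj.2 (Or.inl h1))]
    unfold extL
    rw [dif_neg (c := 1 ≤ j.val ∧ _) (by omega), dif_pos (by omega), dif_pos (by omega)]
    simp [h1]
  · have h1' : 1 ≤ j.val := by omega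
    simp only [if_pos h1']
    rw [sum_fin_single, dif_pos (c := j.val - 1 < n - 1) (by omega)]
    unfold extL
    rw [dif_pos (c := 1 ≤ j.val ∧ _) ⟨h1', by omega⟩]
    by_cases h2 : j.val = n - 2
    · rw [if_pos (hadj.2 (Or.inr h2)), dif_neg (by omega), dif_neg (by omega)]
      abel
    · rw [if_neg (by rw [hadj]; tauto), dif_pos (by omega), dif_pos (by omega)]
      simp only [Nat.add_sub_cancel, zero_add]
      rw [add_comm]
      rfl

lemma chain {A : Type*} [AddCommGroup A] (n : ℕ) (f : ℕ → A) (μ : A)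
    (h : ∀ j, j < n - 1 → f j + f (j + 2) = μ) (s k : ℕ) (hk : s + 4 * k ≤ n) :
    f (s + 4 * k) = f s := by
  induction k with
  | zero => rfl
  | succ k ih =>
    have h1 := h (s + 4 * k) (by omega)
    have h2 := h (s + 4 * k + 2) (by omega)
    rw [← ih (by omega), show s + 4 * (k + 1) = s + 4 * k + 2 + 2 by ring]
    rw [← h2, add_comm] at h1
    exact (add_left_cancel h1).symm

theorem stmt_15 (n m : ℕ) (hn : n % 4 = 1 ∨ n % 4 = 3) (hn3 : 3 ≤ n) (hm : 1 ≤ m)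
    (A : Type*) [AddCommGroup A] (hA : Nontrivial A) :
    vertexMagic (genFriendshipGraph n m) A ↔
      ∃ a : A, ¬ addOrderOf a ∣ 2 * m - 1 := by
  have key : ∀ a : A, (m • (a + a)) = (2 * m - 1) • a + a := by
    intro a
    rw [← succ_nsmul, show 2 * m - 1 + 1 = m * 2 by omega, mul_nsmul', two_nsmul]
  constructor
  · rintro ⟨l, μ, hl, hw⟩
    have hc := hw none
    rw [sum_none n m hn3] at hc
    have hs : ∀ i : Fin m, ∀ j, j < n - 1 → extL n m l i j + extL n m l i (j + 2) = μ := by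
      intro i j hj
      rw [← hw (some (i, ⟨j, hj⟩)), sum_some n m hn3]
    have h0 : ∀ i, extL n m l i 0 = l none := fun i => by
      unfold extL; rw [dif_neg (by omega)]
    have hN : ∀ i, extL n m l i n = l none := fun i => by
      unfold extL; rw [dif_neg (by omega)]
    have hone : ∀ i, extL n m l i 1 = l (some (i, ⟨0, by omega⟩)) := fun i => by
      unfold extL; rw [dif_pos (by omega)]
    let i0 : Fin m := ⟨0, hm⟩
    rcases hn with hn | hn
    · -- ends are c
      have e1 : ∀ i, extL n m l i 1 = l none := fun i => by
        have := chain n (extL n m l i) μ (hs i) 1 (n / 4) (by omega)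
        rw [show 1 + 4 * (n / 4) = n by omega, hN] at this
        exact this.symm
      have e2 : ∀ i, extL n m l i (n - 1) = l none := fun i => by
        have := chain n (extL n m l i) μ (hs i) 0 (n / 4) (by omega)
        rw [show 0 + 4 * (n / 4) = n - 1 by omega, h0] at this
        exact this
      simp only [e1, e2, Finset.sum_const, Finset.card_univ, Fintype.card_fin, key] at hc
      refine ⟨l none, ?_⟩
      rw [addOrderOf_dvd_iff_nsmul_eq_zero]
      intro hz
      rw [hz, zero_add] at hc
      have h2 := hs i0 0 (by omega)
      rw [h0, hc, add_eq_left] at h2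
      unfold extL at h2
      rw [dif_pos (by omega)] at h2
      exact hl _ h2
    · have e1 : ∀ i, extL n m l i 1 = μ - l none := fun i => by
        have := chain n (extL n m l i) μ (hs i) 3 (n / 4) (by omega)
        rw [show 3 + 4 * (n / 4) = n by omega, hN] at this
        have h2 := hs i 1 (by omega)
        rw [← this] at h2
        exact eq_sub_of_add_eq h2
      have e2 : ∀ i, extL n m l i (n - 1) = μ - l none := fun i => by
        have := chain n (extL n m l i) μ (hs i) 2 (n / 4) (by omega)
        rw [show 2 + 4 * (n / 4) = n - 1 by omega] at this
        have h2 := hs i 0 (by omega)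
        rw [h0] at h2
        rw [this]
        exact eq_sub_of_add_eq' h2
      simp only [e1, e2, Finset.sum_const, Finset.card_univ, Fintype.card_fin, key] at hc
      refine ⟨μ - l none, ?_⟩
      rw [addOrderOf_dvd_iff_nsmul_eq_zero]
      intro hz
      rw [hz, zero_add, sub_eq_self] at hc
      exact hl _ hc
  · rintro ⟨a, ha⟩
    rw [addOrderOf_dvd_iff_nsmul_eq_zero] at ha
    have ha0 : a ≠ 0 := by
      rintro rfl
      simp at ha
    set b := (2 * m - 1) • a with hb
    rcases hn with hn | hn
    · let l : Option (Fin m × Fin (n - 1)) → A := fun v => match v with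
        | none => a
        | some (_, j) => if j.val % 4 = 0 ∨ j.val % 4 = 3 then a else b
      have hE : ∀ i k, k ≤ n → extL n m l i k = if k % 4 = 0 ∨ k % 4 = 1 then a else b := by
        intro i k hk
        unfold extL
        split_ifs with h1 h2 h2
        · show (if (k - 1) % 4 = 0 ∨ (k - 1) % 4 = 3 then a else b) = a
          rw [if_pos (by omega)]
        · show (if (k - 1) % 4 = 0 ∨ (k - 1) % 4 = 3 then a else b) = b
          rw [if_neg (by omega)]
        · rfl
        · omega
      refine ⟨l, b + a, ?_, ?_⟩
      · rintro (_ | ⟨i, j⟩)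
        · exact ha0
        · show (if j.val % 4 = 0 ∨ j.val % 4 = 3 then a else b) ≠ 0
          split_ifs <;> assumption
      · rintro (_ | ⟨i, j⟩)
        · rw [sum_none n m hn3, ← key]
          have : ∀ i, extL n m l i 1 + extL n m l i (n - 1) = a + a := fun i => by
            rw [hE i _ (by omega), hE i _ (by omega), if_pos (by omega), if_pos (by omega)]
          simp [this]
        · rw [sum_some n m hn3, hE i _ (by omega), hE i _ (by omega)]
          split_ifs <;> first | omega | abel
    · let l : Option (Fin m × Fin (n - 1)) → A := fun v => match v with
        | none => b
        | some (_, j) => if j.val % 4 = 0 ∨ j.val % 4 = 1 then a else b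
      have hE : ∀ i k, k ≤ n → extL n m l i k = if k % 4 = 1 ∨ k % 4 = 2 then a else b := by
        intro i k hk
        unfold extL
        split_ifs with h1 h2 h2
        · show (if (k - 1) % 4 = 0 ∨ (k - 1) % 4 = 1 then a else b) = a
          rw [if_pos (by omega)]
        · show (if (k - 1) % 4 = 0 ∨ (k - 1) % 4 = 1 then a else b) = b
          rw [if_neg (by omega)]
        · omega
        · rfl
      refine ⟨l, b + a, ?_, ?_⟩
      · rintro (_ | ⟨i, j⟩)
        · exact ha
        · show (if j.val % 4 = 0 ∨ j.val % 4 = 1 then a else b) ≠ 0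
          split_ifs <;> assumption
      · rintro (_ | ⟨i, j⟩)
        · rw [sum_none n m hn3, ← key]
          have : ∀ i, extL n m l i 1 + extL n m l i (n - 1) = a + a := fun i => by
            rw [hE i _ (by omega), hE i _ (by omega), if_pos (by omega), if_pos (by omega)]
          simp [this]
        · rw [sum_some n m hn3, hE i _ (by omega), hE i _ (by omega)]
          split_ifs <;> first | omega | abel
end

section
/- If n ≡ 0 (mod 4) and m ≥ 1, then the generalised friendship graph f_{n,m} is group vertex magic, i.e., f_{n,m} is A-vertex magic for every non-trivial Abelian group A. -/
open scoped Classical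

def magC {A : Type*} [AddCommGroup A] (a : A) (p : ℕ) : A := if p % 4 < 2 then a else -a

theorem magC_add {A : Type*} [AddCommGroup A] (a : A) (p : ℕ) :
    magC a p + magC a (p + 2) = 0 := by
  unfold magC
  split_ifs <;> first | omega | simp

theorem sum_two {A : Type*} [AddCommGroup A] (N : ℕ) (f : ℕ → A) (x y : ℕ) (hxy : x ≠ y) :
    (∑ j : Fin N, if (j.val = x ∨ j.val = y) then f j.val else 0)
      = (if x < N then f x else 0) + (if y < N then f y else 0) := by
  rw [Fin.sum_univ_eq_sum_range (fun j => if (j = x ∨ j = y) then f j else 0) N]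
  have : ∀ j ∈ Finset.range N, (if (j = x ∨ j = y) then f j else 0)
      = (if j = x then f j else 0) + (if j = y then f j else 0) := by
    intro j _
    by_cases h1 : j = x <;> by_cases h2 : j = y <;> simp [h1, h2]
    · omega
    · intro h; omega
    · intro h; omega
  rw [Finset.sum_congr rfl this, Finset.sum_add_distrib]
  simp [Finset.sum_ite_eq']

theorem stmt_16 (n m : ℕ) (hn : n % 4 = 0) (hm : 1 ≤ m) :
    ∀ (A : Type*) [AddCommGroup A], Nontrivial A →
      vertexMagic (genFriendshipGraph n m) A := by
  intro A _ hA
  obtain ⟨a, ha⟩ := exists_ne (0 : A)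
  refine ⟨fun v => match v with
    | none => a
    | some (_, j) => magC a (j.val + 1), 0, ?_, ?_⟩
  · rintro (_ | ⟨i, j⟩)
    · exact ha
    · simp only [magC]
      split_ifs <;> simpa using ha
  · rintro (_ | ⟨i, j⟩)
    · rw [Fintype.sum_option, Fintype.sum_prod_type]
      rw [if_neg (SimpleGraph.irrefl _), zero_add]
      apply Finset.sum_eq_zero
      intro i _
      rcases Nat.eq_zero_or_pos n with h0 | h0
      · subst h0
        apply Finset.sum_eq_zero
        intro j _
        exact absurd j.isLt (by omega)
      · have := sum_two (n - 1) (fun j => magC a (j + 1)) 0 (n - 2) (by omega)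
        rw [if_pos (by omega), if_pos (by omega)] at this
        refine Eq.trans ?_ (this.trans ?_)
        · refine Finset.sum_congr rfl fun j _ => ?_
          exact if_congr Iff.rfl rfl rfl
        · have h3 : (n - 2 + 1) % 4 = 3 := by omega
          simp [magC, h3]
    · have hj := j.isLt
      rw [Fintype.sum_option, Fintype.sum_prod_type]
      have key : (∑ i' : Fin m, ∑ j' : Fin (n - 1),
          if (genFriendshipGraph n m).Adj (some (i, j)) (some (i', j'))
            then magC a (j'.val + 1) else 0)
          = (if j.val + 1 < n - 1 then magC a (j.val + 2) else 0)
            + (if 0 < j.val then magC a j.val else 0) := by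
        rw [Finset.sum_eq_single i]
        · rcases Nat.eq_zero_or_pos j.val with h0 | h0
          · have := sum_two (n - 1) (fun j => magC a (j + 1)) (j.val + 1) n (by omega)
            rw [if_neg (show ¬ n < n - 1 by omega)] at this
            rw [if_neg (show ¬ 0 < j.val by omega)]
            refine Eq.trans ?_ this
            refine Finset.sum_congr rfl fun j' _ => ?_
            refine if_congr ?_ rfl rfl
            simp only [genFriendshipGraph, true_and]
            omega
          · have := sum_two (n - 1) (fun j => magC a (j + 1)) (j.val + 1) (j.val - 1) (by omega)
            rw [if_pos (show j.val - 1 < n - 1 by omega)] at this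
            rw [if_pos h0]
            simp only [Nat.sub_add_cancel (show 1 ≤ j.val from h0)] at this
            refine Eq.trans ?_ this
            refine Finset.sum_congr rfl fun j' _ => ?_
            refine if_congr ?_ rfl rfl
            simp only [genFriendshipGraph, true_and]
            omega
        · intro b _ hb
          refine Finset.sum_eq_zero fun j' _ => if_neg ?_
          rintro ⟨h, _⟩
          exact hb h.symm
        · simp
      have hnone : (genFriendshipGraph n m).Adj (some (i, j)) none ↔
          (j.val = 0 ∨ j.val = n - 2) := Iff.rfl
      refine (congrArg₂ (· + ·) (if_congr hnone rfl rfl) key).trans ?_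
      have h2 := magC_add a j.val
      by_cases h0 : j.val = 0
      · rw [h0]
        simp [magC, show 1 < n - 1 by omega]
      · by_cases h1 : j.val = n - 2
        · have h3 : (n - 2) % 4 = 2 := by omega
          simp [magC, h1, h3, show ¬ (n - 2 + 1 < n - 1) by omega, show 2 < n by omega]
        · rw [if_neg (by omega), if_pos (by omega), if_pos (by omega), zero_add, add_comm]
          exact h2
end

section
/- Let n ≡ 2 (mod 4) with n ≥ 6 and m ≥ 1. The generalised friendship graph f_{n,m} is group vertex magic (A-vertex magic for every non-trivial Abelian group A) if and only if m ≡ 1 (mod 3). -/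
open scoped Classical

theorem path_sum {A : Type*} [AddCommGroup A] (N : ℕ) (f : ℕ → A) (j : ℕ) (hj : j < N) :
    (∑ j' : Fin N, if (j + 1 = j'.val ∨ j'.val + 1 = j) then f j'.val else 0) =
      (if j + 1 < N then f (j + 1) else 0) + (if 1 ≤ j then f (j - 1) else 0) := by
  rw [Fin.sum_univ_eq_sum_range (fun x => if (j + 1 = x ∨ x + 1 = j) then f x else 0) N]
  have h : ∀ x ∈ Finset.range N, (if (j + 1 = x ∨ x + 1 = j) then f x else 0) =
      (if j + 1 = x then f x else 0) +
        (if j - 1 = x then (if 1 ≤ j then f x else 0) else 0) := by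
    intro x _
    by_cases h1 : j + 1 = x
    · have h2 : ¬ (j - 1 = x) := by omega
      simp [h1, h2]
    · by_cases h2 : x + 1 = j
      · have h3 : j - 1 = x := by omega
        have h4 : 1 ≤ j := by omega
        rw [if_pos (Or.inr h2), if_neg h1, if_pos h3, if_pos h4, zero_add]
      · rw [if_neg (by tauto), if_neg h1, zero_add]
        split_ifs
        · omega
        · rfl
        · rfl
  rw [Finset.sum_congr rfl h, Finset.sum_add_distrib, Finset.sum_ite_eq, Finset.sum_ite_eq]
  have : j - 1 < N := by omega
  simp [this]

theorem ends_sum {A : Type*} [AddCommGroup A] (n : ℕ) (hn : 6 ≤ n) (f : ℕ → A) :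
    (∑ j' : Fin (n - 1), if (j'.val = 0 ∨ j'.val = n - 2) then f j'.val else 0) =
      f 0 + f (n - 2) := by
  rw [Fin.sum_univ_eq_sum_range (fun x => if (x = 0 ∨ x = n - 2) then f x else 0) (n - 1)]
  have h : ∀ x ∈ Finset.range (n - 1), (if (x = 0 ∨ x = n - 2) then f x else 0) =
      (if 0 = x then f x else 0) + (if n - 2 = x then f x else 0) := by
    intro x _
    by_cases h1 : 0 = x
    · rw [if_pos (Or.inl h1.symm), if_pos h1, if_neg (by omega), add_zero]
    · by_cases h2 : n - 2 = x
      · rw [if_pos (Or.inr h2.symm), if_neg h1, if_pos h2, zero_add]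
      · rw [if_neg (by omega), if_neg h1, if_neg h2, zero_add]
  rw [Finset.sum_congr rfl h, Finset.sum_add_distrib, Finset.sum_ite_eq, Finset.sum_ite_eq]
  rw [if_pos (Finset.mem_range.2 (by omega)), if_pos (Finset.mem_range.2 (by omega))]

theorem center_sum {A : Type*} [AddCommGroup A] (n m : ℕ) (hn : 6 ≤ n)
    (l : Option (Fin m × Fin (n - 1)) → A) (f : Fin m → ℕ → A)
    (hf : ∀ i j, l (some (i, j)) = f i j.val) :
    (∑ u, if (genFriendshipGraph n m).Adj none u then l u else 0) =
      ∑ i, (f i 0 + f i (n - 2)) := by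
  rw [Fintype.sum_option, Fintype.sum_prod_type]
  rw [if_neg (SimpleGraph.irrefl (genFriendshipGraph n m)), zero_add]
  simp only [genFriendshipGraph, hf]
  exact Finset.sum_congr rfl fun i _ => by convert ends_sum n hn (f i)

theorem outer_sum {A : Type*} [AddCommGroup A] (n m : ℕ)
    (l : Option (Fin m × Fin (n - 1)) → A) (f : Fin m → ℕ → A)
    (hf : ∀ i j, l (some (i, j)) = f i j.val) (i : Fin m) (j : Fin (n - 1)) :
    (∑ u, if (genFriendshipGraph n m).Adj (some (i, j)) u then l u else 0) =
      (if j.val = 0 ∨ j.val = n - 2 then l none else 0) +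
      ((if j.val + 1 < n - 1 then f i (j.val + 1) else 0) +
        (if 1 ≤ j.val then f i (j.val - 1) else 0)) := by
  rw [Fintype.sum_option, Fintype.sum_prod_type]
  simp only [genFriendshipGraph, hf]
  congr 1
  · congr
  rw [Finset.sum_eq_single i]
  · rw [← path_sum (n - 1) (f i) j.val j.2]
    refine Finset.sum_congr rfl fun x _ => ?_
    simp
  · intro b _ hb
    refine Finset.sum_eq_zero fun x _ => ?_
    rw [if_neg]
    exact fun h => hb h.1.symm
  · simp

theorem magic_iff {A : Type*} [AddCommGroup A] (n m : ℕ) (hn : n % 4 = 2) (hn6 : 6 ≤ n)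
    (hm : 1 ≤ m) :
    vertexMagic (genFriendshipGraph n m) A ↔
      ∃ (c : A) (x : Fin m → A), c ≠ 0 ∧ (∀ i, x i ≠ 0) ∧ (∀ i, x i ≠ c + c) ∧
        ∑ i, (x i + x i) = c + c := by
  constructor
  · rintro ⟨l, μ, hl, hs⟩
    let f : Fin m → ℕ → A := fun i j => if h : j < n - 1 then l (some (i, ⟨j, h⟩)) else 0
    have hf : ∀ i j, l (some (i, j)) = f i j.val := by
      intro i j
      simp [f]
    have hc := hs none
    rw [center_sum n m hn6 l f hf] at hc
    have ho : ∀ i j, j < n - 1 →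
        (if j = 0 ∨ j = n - 2 then l none else 0) +
          ((if j + 1 < n - 1 then f i (j + 1) else 0) +
            (if 1 ≤ j then f i (j - 1) else 0)) = μ := fun i j hj =>
      (outer_sum n m l f hf i ⟨j, hj⟩).symm.trans (hs (some (i, ⟨j, hj⟩)))
    have hint : ∀ i j, j + 2 < n - 1 → f i (j + 2) = μ - f i j := by
      intro i j hj
      have := ho i (j + 1) (by omega)
      rw [if_neg (by omega), if_pos (by omega), if_pos (by omega), zero_add] at this
      rw [← this]
      simp
    have h0 : ∀ i, f i 1 = μ - l none := by
      intro i
      have := ho i 0 (by omega)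
      rw [if_pos (by omega), if_pos (by omega), if_neg (by omega), add_zero] at this
      rw [← this]
      simp
    have h1 : ∀ i, f i (n - 3) = μ - l none := by
      intro i
      have := ho i (n - 2) (by omega)
      rw [if_pos (by omega), if_neg (by omega), if_pos (by omega), zero_add] at this
      rw [← this, show n - 2 - 1 = n - 3 by omega]
      simp
    have hper : ∀ i j t, j + 4 * t < n - 1 → f i (j + 4 * t) = f i j := by
      intro i j t
      induction t with
      | zero => simp
      | succ t ih =>
        intro h
        rw [show j + 4 * (t + 1) = (j + 4 * t + 2) + 2 by ring, hint _ _ (by omega),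
          hint _ _ (by omega), ih (by omega)]
        simp
    have hμ : μ = l none + l none := by
      have i : Fin m := ⟨0, hm⟩
      have a := h1 i
      rw [show n - 3 = 3 + 4 * ((n - 6) / 4) by omega, hper _ _ _ (by omega),
        hint i 1 (by omega), h0] at a
      rw [sub_sub_cancel] at a
      exact (eq_sub_iff_add_eq.1 a).symm
    refine ⟨l none, fun i => f i 0, hl none, ?_, ?_, ?_⟩
    · intro i
      have := hf i ⟨0, by omega⟩
      simp only at this
      change f i 0 ≠ 0
      rw [← this]
      exact hl _
    · intro i h
      change f i 0 = _ at h
      have := hf i ⟨2, by omega⟩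
      simp only at this
      rw [hint i 0 (by omega), h, hμ, sub_self] at this
      exact hl _ this
    · rw [← hμ, ← hc]
      refine Finset.sum_congr rfl fun i _ => ?_
      congr 1
      rw [show n - 2 = 0 + 4 * ((n - 2) / 4) by omega, hper _ _ _ (by omega)]
  · rintro ⟨c, x, hc, hx, hx2, hs⟩
    let f : Fin m → ℕ → A := fun i j =>
      if j % 2 = 1 then c else if j % 4 = 0 then x i else c + c - x i
    refine ⟨fun v => match v with
      | none => c
      | some (i, j) => f i j.val, c + c, ?_, ?_⟩
    · rintro (_ | ⟨i, j⟩)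
      · exact hc
      · simp only [f]
        split_ifs
        · exact hc
        · exact hx i
        · exact sub_ne_zero.2 (hx2 i).symm
    · rintro (_ | ⟨i, j⟩)
      · rw [center_sum n m hn6 _ f (fun _ _ => rfl), ← hs]
        refine Finset.sum_congr rfl fun i _ => ?_
        have e1 : f i 0 = x i := by simp [f]
        have e2 : f i (n - 2) = x i := by
          simp only [f]
          rw [if_neg (by omega), if_pos (by omega)]
        rw [e1, e2]
      · rw [outer_sum n m _ f (fun _ _ => rfl)]
        obtain ⟨j, hj⟩ := j
        simp only
        by_cases h0 : j = 0
        · subst h0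
          rw [if_pos (by omega), if_pos (by omega), if_neg (by omega)]
          simp [f]
        by_cases h1 : j = n - 2
        · rw [if_pos (by omega), if_neg (by omega), if_pos (by omega)]
          simp only [f]
          rw [if_pos (by omega), zero_add]
        rw [if_neg (by omega), if_pos (by omega), if_pos (by omega)]
        simp only [f]
        by_cases h2 : j % 2 = 0
        · rw [if_pos (by omega), if_pos (by omega), zero_add]
        by_cases h3 : j % 4 = 1
        · rw [if_neg (by omega), if_neg (by omega), if_neg (by omega), if_pos (by omega)]
          abel
        · rw [if_neg (by omega), if_pos (by omega), if_neg (by omega), if_neg (by omega)]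
          abel

theorem alt_sum {A : Type*} [AddCommGroup A] (c : A) (t : ℕ) :
    ∑ i ∈ Finset.range (2 * t), (if i % 2 = 0 then c else -c) = 0 := by
  induction t with
  | zero => simp
  | succ t ih =>
    rw [show 2 * (t + 1) = 2 * t + 1 + 1 by ring, Finset.sum_range_succ, Finset.sum_range_succ,
      ih, if_pos (by omega), if_neg (by omega)]
    simp

theorem exists_x {A : Type*} [AddCommGroup A] (c : A) (m : ℕ) (hm : 1 ≤ m) (hc : c ≠ 0)
    (h2 : ∀ a : A, a + a = 0 → a = 0) (h3 : c + c + c ≠ 0) :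
    ∃ x : ℕ → A, (∀ i, x i ≠ 0) ∧ (∀ i, x i ≠ c + c) ∧ ∑ i ∈ Finset.range m, x i = c := by
  have hc2 : c + c ≠ 0 := fun h => hc (h2 _ h)
  have hc4 : c + c + (c + c) ≠ 0 := fun h => hc2 (h2 _ h)
  have e1 : c ≠ c + c := fun h => hc (by simpa using h)
  have e2 : -c ≠ c + c := fun h => h3 (by rw [← h]; simp)
  have e3 : c + c + c ≠ c + c := fun h => hc (by simpa using h)
  have e4 : -(c + c) ≠ c + c := fun h => hc4 (by nth_rewrite 1 [← h]; simp)
  rcases Nat.even_or_odd' m with ⟨t, rfl | rfl⟩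
  · obtain ⟨s, rfl⟩ : ∃ s, t = s + 1 := ⟨t - 1, by omega⟩
    refine ⟨fun i => if i < 2 * s then (if i % 2 = 0 then c else -c) else
      if i = 2 * s then c + c + c else -(c + c), ?_, ?_, ?_⟩
    · intro i
      dsimp only
      split_ifs <;> simp only [ne_eq, neg_eq_zero] <;> assumption
    · intro i
      dsimp only
      split_ifs <;> assumption
    · rw [show 2 * (s + 1) = 2 * s + 1 + 1 by ring, Finset.sum_range_succ, Finset.sum_range_succ]
      rw [Finset.sum_congr rfl (fun i hi => if_pos (Finset.mem_range.1 hi)), alt_sum]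
      simp
  · refine ⟨fun i => if i % 2 = 0 then c else -c, ?_, ?_, ?_⟩
    · intro i
      dsimp only
      split_ifs <;> simp only [ne_eq, neg_eq_zero] <;> assumption
    · intro i
      dsimp only
      split_ifs <;> assumption
    · rw [Finset.sum_range_succ, alt_sum]
      simp

theorem stmt_17 (n m : ℕ) (hn : n % 4 = 2) (hn6 : 6 ≤ n) (hm : 1 ≤ m) :
    (∀ (A : Type*) [AddCommGroup A], Nontrivial A →
      vertexMagic (genFriendshipGraph n m) A) ↔ m % 3 = 1 := by
  constructor
  · intro h
    obtain ⟨c, x, hc, hx, hx2, hs⟩ := (magic_iff n m hn hn6 hm).1 (h (ULift (ZMod 3)) inferInstance)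
    have key : ∀ c x : ZMod 3, c ≠ 0 → x ≠ 0 → x ≠ c + c → x = c := by decide
    have hxc : ∀ i, x i = c := by
      intro i
      apply ULift.ext
      apply key
      · exact fun h => hc (ULift.ext _ _ h)
      · exact fun h => hx i (ULift.ext _ _ h)
      · exact fun h => hx2 i (ULift.ext _ _ h)
    simp only [hxc, Finset.sum_const, Finset.card_univ, Fintype.card_fin] at hs
    have hs' := congrArg ULift.down hs
    have hc' : c.down ≠ 0 := fun h => hc (ULift.ext _ _ h)
    simp only [ULift.smul_down, ULift.add_down, nsmul_eq_mul] at hs'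
    have key2 : ∀ c k : ZMod 3, c ≠ 0 → k * (c + c) = c + c → k = 1 := by decide
    have := key2 _ _ hc' hs'
    have h1 : ((m : ℕ) : ZMod 3) = ((1 : ℕ) : ZMod 3) := by simpa using this
    rw [ZMod.natCast_eq_natCast_iff] at h1
    exact h1
  · intro h A _ hA
    rw [magic_iff n m hn hn6 hm]
    by_cases h2 : ∀ a : A, a + a = 0 → a = 0
    · by_cases h3 : ∀ a : A, a + a + a = 0
      · obtain ⟨c, hc⟩ := exists_ne (0 : A)
        refine ⟨c, fun _ => c, hc, fun _ => hc, fun _ h => hc (by simpa using h), ?_⟩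
        obtain ⟨t, rfl⟩ : ∃ t, m = t * 3 + 1 := ⟨m / 3, by omega⟩
        have : 3 • (c + c) = 0 := by
          rw [← h3 (c + c)]
          abel
        simp only [Finset.sum_const, Finset.card_univ, Fintype.card_fin]
        rw [add_nsmul, mul_nsmul', this]
        simp
      · push Not at h3
        obtain ⟨c, h3⟩ := h3
        have hc : c ≠ 0 := by
          rintro rfl
          simp at h3
        obtain ⟨x, a1, a2, a3⟩ := exists_x c m hm hc h2 h3
        refine ⟨c, fun i => x i, hc, fun i => a1 i, fun i => a2 i, ?_⟩
        rw [Finset.sum_add_distrib, Fin.sum_univ_eq_sum_range x m, a3]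
    · push Not at h2
      obtain ⟨c, hc2, hc⟩ := h2
      exact ⟨c, fun _ => c, hc, fun _ => hc, fun _ => by rw [hc2]; exact hc, by simp [hc2]⟩
end
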